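/- arXiv:1607.07562 — 2 statements merged into one kernel-verified Lean document; each statement's English description precedes it below -/
import Mathlib

section
/- Let Φ : ℂ × ℂ → ℂ be a holomorphic (jointly complex-analytic) function of two complex variables that satisfies the complexified Born–Infeld equation (1 + Φ_x²)·Φ_yy − 2·Φ_x·Φ_y·Φ_xy − (1 − Φ_y²)·Φ_xx = 0 at every point, where subscripts denote complex partial derivatives in the first and second variable. Then the function Ψ defined by Ψ(x,y) := Φ(i·x, y) satisfies the complexified maximal surface equation (1 − Ψ_x²)·Ψ_yy + 2·Ψ_x·Ψ_y·Ψ_xy + (1 − Ψ_y²)·Ψ_xx = 0 at every point. -/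
/-!
For `Ψ (x, y) = Φ (I * x, y)` the chain rule gives `Ψ_x = I Φ_x`, `Ψ_xy = I Φ_xy`,
`Ψ_xx = I² Φ_xx`, `Ψ_y = Φ_y`, `Ψ_yy = Φ_yy`, the right-hand sides being taken at `(I * x, y)`
(`cpd1_comp_mul`, `cpd2_comp_mul` and linearity). With `I² = -1`, the maximal surface expression
of `Ψ` at `(x, y)` is the Born–Infeld expression of `Φ` at `(I * x, y)`.
-/

open Complex

/-- Complex partial derivative in the first variable of a function `ℂ × ℂ → ℂ`. -/
noncomputable def cpd1 (f : ℂ × ℂ → ℂ) : ℂ × ℂ → ℂ :=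
  fun p => deriv (fun x => f (x, p.2)) p.1

/-- Complex partial derivative in the second variable of a function `ℂ × ℂ → ℂ`. -/
noncomputable def cpd2 (f : ℂ × ℂ → ℂ) : ℂ × ℂ → ℂ :=
  fun p => deriv (fun y => f (p.1, y)) p.2

/-- No differentiability of `f` is needed: precomposition with `x ↦ c * x` rescales `deriv`
even at junk values. -/
theorem cpd1_comp_mul (c : ℂ) (f : ℂ × ℂ → ℂ) :
    cpd1 (fun p => f (c * p.1, p.2)) = fun p => c * cpd1 f (c * p.1, p.2) := by
  funext p
  simpa [cpd1] using deriv_comp_mul_left c (fun x => f (x, p.2)) p.1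

theorem cpd2_comp_mul (c : ℂ) (f : ℂ × ℂ → ℂ) :
    cpd2 (fun p => f (c * p.1, p.2)) = fun p => cpd2 f (c * p.1, p.2) := rfl

theorem cpd1_const_mul (c : ℂ) (f : ℂ × ℂ → ℂ) :
    cpd1 (fun p => c * f p) = fun p => c * cpd1 f p := by
  funext p
  exact deriv_const_mul_field c

theorem cpd2_const_mul (c : ℂ) (f : ℂ × ℂ → ℂ) :
    cpd2 (fun p => c * f p) = fun p => c * cpd2 f p := by
  funext p
  exact deriv_const_mul_field c

/-- Wick rotation in the first variable turns a holomorphic solution of the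
complexified Born–Infeld equation into a solution of the complexified maximal
surface equation. -/
theorem wick_rotation_BornInfeld_to_maximal
    (Φ : ℂ × ℂ → ℂ) (hΦ : Differentiable ℂ Φ)
    (hBI : ∀ p : ℂ × ℂ,
      (1 + (cpd1 Φ p) ^ 2) * cpd2 (cpd2 Φ) p
        - 2 * cpd1 Φ p * cpd2 Φ p * cpd2 (cpd1 Φ) p
        - (1 - (cpd2 Φ p) ^ 2) * cpd1 (cpd1 Φ) p = 0)
    (Ψ : ℂ × ℂ → ℂ) (hΨ : ∀ x y : ℂ, Ψ (x, y) = Φ (I * x, y)) :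
    ∀ p : ℂ × ℂ,
      (1 - (cpd1 Ψ p) ^ 2) * cpd2 (cpd2 Ψ) p
        + 2 * cpd1 Ψ p * cpd2 Ψ p * cpd2 (cpd1 Ψ) p
        + (1 - (cpd2 Ψ p) ^ 2) * cpd1 (cpd1 Ψ) p = 0 := by
  intro p
  obtain rfl : Ψ = fun p => Φ (I * p.1, p.2) := funext fun p => hΨ p.1 p.2
  have h := hBI (I * p.1, p.2)
  have hxx : cpd1 (fun p : ℂ × ℂ => I * cpd1 Φ (I * p.1, p.2))
      = fun p => I * (I * cpd1 (cpd1 Φ) (I * p.1, p.2)) := by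
    rw [cpd1_const_mul I (fun p => cpd1 Φ (I * p.1, p.2)), cpd1_comp_mul]
  have hxy : cpd2 (fun p : ℂ × ℂ => I * cpd1 Φ (I * p.1, p.2))
      = fun p => I * cpd2 (cpd1 Φ) (I * p.1, p.2) := by
    rw [cpd2_const_mul I (fun p => cpd1 Φ (I * p.1, p.2)), cpd2_comp_mul]
  rw [cpd1_comp_mul, hxx, hxy, cpd2_comp_mul, cpd2_comp_mul]
  set a := cpd1 Φ (I * p.1, p.2)
  set b := cpd2 Φ (I * p.1, p.2)
  set r := cpd1 (cpd1 Φ) (I * p.1, p.2)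
  set s := cpd2 (cpd1 Φ) (I * p.1, p.2)
  set t := cpd2 (cpd2 Φ) (I * p.1, p.2)
  linear_combination h + (-a ^ 2 * t + 2 * a * b * s + (1 - b ^ 2) * r) * I_sq
end

section
/- Let ζ be a complex number with Im(ζ) > 0, and define x := (1/2)·Im(ζ − 1/ζ) and y := −(1/2)·Re(ζ + 1/ζ). Then x > 0 and arg(ζ) = π/2 + arctan(y/x), where arg denotes the principal argument. -/
/-!
Writing `1 / ζ = conj ζ / |ζ|²` shows `x = c · Im ζ` and `y = -c · Re ζ` with
`c = (1 + 1 / |ζ|²) / 2 > 0`. Hence `x > 0`, and `-(y / x) = Re ζ / Im ζ` is the cotangent of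
`arg ζ`, that is, `tan (π / 2 - arg ζ)`. As `0 < arg ζ < π` in the upper half-plane, the angle
`π / 2 - arg ζ` lies in the range of `arctan`, so `arctan` inverts this tangent.
-/

open Complex

/-- The Weierstrass–Enneper parametrization of the Lorentzian helicoid with data
`M(ζ) = −i/(2ζ²)` lies on the graph `φ = π/2 + arctan(y/x)`: for `Im ζ > 0` the
parametrized point has `x > 0` and `arg ζ = π/2 + arctan(y/x)`. -/
theorem helicoid_parametrization_on_graph
    (ζ : ℂ) (hζ : 0 < ζ.im)
    (x y : ℝ)
    (hx : x = (1 / 2) * (ζ - 1 / ζ).im)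
    (hy : y = -(1 / 2) * (ζ + 1 / ζ).re) :
    0 < x ∧ Complex.arg ζ = Real.pi / 2 + Real.arctan (y / x) := by
  have hζ0 : ζ ≠ 0 := by
    rintro rfl
    simp at hζ
  have hn : 0 < Complex.normSq ζ := Complex.normSq_pos.mpr hζ0
  -- Since `1 / ζ = conj ζ / |ζ|²`, the point `(x, y)` is a positive multiple of `(Im ζ, -Re ζ)`.
  obtain ⟨c, hc, hxc, hyc⟩ : ∃ c : ℝ, 0 < c ∧ x = c * ζ.im ∧ y = -(c * ζ.re) := by
    refine ⟨1 / 2 * (1 + 1 / Complex.normSq ζ), by positivity, ?_, ?_⟩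
    · rw [hx, one_div ζ, Complex.sub_im, Complex.inv_im]
      ring
    · rw [hy, one_div ζ, Complex.add_re, Complex.inv_re]
      ring
  have hx0 : 0 < x := hxc ▸ mul_pos hc hζ
  refine ⟨hx0, ?_⟩
  have harg0 : 0 < Complex.arg ζ :=
    lt_of_le_of_ne (Complex.arg_nonneg_iff.mpr hζ.le)
      fun h => hζ.ne' (Complex.arg_eq_zero_iff.mp h.symm).2
  have hargpi : Complex.arg ζ < Real.pi :=
    Complex.arg_lt_pi_iff.mpr (Or.inr hζ.ne')
  have htan : Real.tan (Real.pi / 2 - Complex.arg ζ) = -(y / x) := by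
    rw [Real.tan_pi_div_two_sub, Complex.tan_arg, inv_div, hxc, hyc, neg_div, neg_neg,
      mul_div_mul_left _ _ hc.ne']
  have harctan : Real.arctan (-(y / x)) = Real.pi / 2 - Complex.arg ζ := by
    rw [← htan]
    exact Real.arctan_tan (by linarith) (by linarith)
  rw [Real.arctan_neg] at harctan
  linarith
end
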